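/- There exists a universal constant d₀ ∈ ℕ such that for all d ≥ d₀, all r ∈ ℕ, and all ε ∈ [0,1/3): if A : P_{r,2d} → {0,1} is the indicator function of an independent set of the graph 𝒢 with E_{f∈P_{r,2d}}[A(f)] = 1/3 − ε, then Σ_{α ∈ Λ_{r,2d} : |α| > 1} |Â(α)|² ≤ 3ε. -/

import Mathlib

open scoped BigOperators

abbrev F3 := ZMod 3
abbrev Pt (r : ℕ) := Fin r → F3
abbrev Fn (r : ℕ) := Pt r → F3

/-- The set of functions `F₃^r → F₃` computed by polynomials of total degree at most `d`
with individual degrees at most `2`. -/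
def PolySet (r d : ℕ) : Set (Fn r) :=
  {g | ∃ P : MvPolynomial (Fin r) F3,
        P.totalDegree ≤ d ∧ (∀ i, P.degreeOf i ≤ 2) ∧
        ∀ x, g x = MvPolynomial.eval x P}

noncomputable def polyFinset (r d : ℕ) : Finset (Fn r) :=
  (Set.toFinite (PolySet r d)).toFinset

/-- Support size `|β|`. -/
def supp {r : ℕ} (β : Fn r) : ℕ := (Finset.univ.filter fun x => β x ≠ 0).card

/-- Dot product `⟨β, f⟩ = Σ_x β(x) f(x)` in `F₃`. -/
def dotF {r : ℕ} (β f : Fn r) : F3 := ∑ x, β x * f x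

noncomputable def ω : ℂ := Complex.exp (2 * (Real.pi : ℂ) * Complex.I / 3)

/-- The character `χ_β(f) = ω^{⟨β,f⟩}`. -/
noncomputable def chi {r : ℕ} (β f : Fn r) : ℂ := ω ^ (dotF β f).val

/-- The dual `S^⊥` of a set of functions. -/
def dualSet (r : ℕ) (S : Set (Fn r)) : Set (Fn r) := {g | ∀ h ∈ S, dotF g h = 0}

/-- `Λ` contains exactly one representative, of minimal support size, from each coset
of `𝔉_r` modulo `P_{r,d}^⊥`. -/
def IsMinRepSet (r d : ℕ) (Λ : Finset (Fn r)) : Prop :=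
  (∀ β : Fn r, ∃! β', β' ∈ Λ ∧ β - β' ∈ dualSet r (PolySet r d)) ∧
  (∀ β' ∈ Λ, ∀ γ : Fn r, β' - γ ∈ dualSet r (PolySet r d) → supp β' ≤ supp γ)

/-- The noise `a·(p² + 1)` (pointwise). -/
def shift {r : ℕ} (p : Fn r) (a : F3) : Fn r := fun x => a * (p x ^ 2 + 1)

/-- Fourier coefficient `Â(β)` of a function on `P_{r,d}`. -/
noncomputable def fourierP (r d : ℕ) (A : Fn r → ℂ) (β : Fn r) : ℂ :=
  (∑ g ∈ polyFinset r d, A g * (starRingEnd ℂ) (chi β g)) / ((polyFinset r d).card : ℂ)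

/-- Expectation `E_{f ∈ P_{r,d}}[A(f)]`. -/
noncomputable def expP (r d : ℕ) (A : Fn r → ℝ) : ℝ :=
  (∑ f ∈ polyFinset r d, A f) / ((polyFinset r d).card : ℝ)

/-- Degree-`k` influence `Inf_x^{≤k}(A)` with respect to a set `Λ` of minimal-support
coset representatives. -/
noncomputable def infP (r d k : ℕ) (Λ : Finset (Fn r)) (A : Fn r → ℝ) (x : Pt r) : ℝ :=
  ∑ β ∈ Λ.filter (fun β => β x ≠ 0 ∧ supp β ≤ k),
    ‖fourierP r d (fun g => (A g : ℂ)) β‖ ^ 2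

/-!
Let `lam β` be the average of `χ_β(p ^ 2 + 1)` over `p ∈ P_{r,d}`. Independence of `A` gives
`∑ |Â(β)|² * lam β = 0`, while `∑ |Â(β)|² = Â(0) = 𝔼 A` because `A` is an indicator. Each `lam β`
has real part at least `-1/2`, as an average of cube roots of unity, and Hoffman's argument turns
any improvement on this bound for a set of characters into a bound for the mass of `A` on that set.

Unless `β` is congruent to a function supported on at most one point, `lam β` has real part at
least `-1/3`. Up to the factor `ω ^ ⟨β, 1⟩` it is the normalised Gauss sum of the quadratic form
`p ↦ ⟨β, p ^ 2⟩`, of absolute value `3 ^ (-rank / 2)`, which settles rank at least two. A Gauss sum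
of smaller rank has nonnegative real part, which settles `⟨β, 1⟩ = 0`. If finally `⟨β, 1⟩ ≠ 0` and
the rank is at most one, then the vanishing minors `⟨β, 1⟩ ⟨β, p q⟩ = ⟨β, p⟩ ⟨β, q⟩` make
`⟨β, ·⟩ / ⟨β, 1⟩` multiplicative, hence the evaluation at a point `z`, and `β` is congruent to a
multiple of the point mass at `z`.
-/

section FiniteFourier

open Finset ComplexConjugate

variable {G : Type*} [AddCommGroup G] [Fintype G]

/-- The Fourier coefficient of `A` at the character `χ` of a finite abelian group, normalised by
the uniform probability measure on the group. -/
noncomputable def charCoeff (A : G → ℂ) (χ : AddChar G ℂ) : ℂ := 𝔼 g, A g * conj (χ g)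

lemma sum_norm_charCoeff_sq_mul (A : G → ℂ) (h : G) :
    ∑ χ, (‖charCoeff A χ‖ ^ 2 : ℂ) * χ h = 𝔼 g, A (g + h) * conj (A g) := by
  classical
  have expand (χ : AddChar G ℂ) : (‖charCoeff A χ‖ ^ 2 : ℂ) * χ h =
      𝔼 g, 𝔼 f, conj (A g) * A f * χ (g + h - f) := by
    rw [← Complex.conj_mul', charCoeff, map_expect, expect_mul_expect, expect_mul]
    refine expect_congr rfl fun g _ ↦ ?_
    rw [expect_mul]
    refine expect_congr rfl fun f _ ↦ ?_
    rw [map_mul, Complex.conj_conj, sub_eq_add_neg, AddChar.map_add_eq_mul,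
      AddChar.map_add_eq_mul, AddChar.map_neg_eq_conj]
    ring
  have orthogonality (g f : G) : ∑ χ : AddChar G ℂ, conj (A g) * A f * χ (g + h - f) =
      if g + h = f then Fintype.card G * (A (g + h) * conj (A g)) else 0 := by
    rw [← mul_sum, AddChar.sum_apply_eq_ite, mul_ite, mul_zero]
    simp only [sub_eq_zero]
    refine ite_congr rfl (fun hf ↦ ?_) fun _ ↦ rfl
    rw [← hf]; ring
  calc ∑ χ, (‖charCoeff A χ‖ ^ 2 : ℂ) * χ h
      = 𝔼 g, 𝔼 f, ∑ χ : AddChar G ℂ, conj (A g) * A f * χ (g + h - f) := by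
        simp only [expand, expect_sum_comm]
    _ = 𝔼 g, A (g + h) * conj (A g) := by
        refine expect_congr rfl fun g _ ↦ ?_
        simp only [orthogonality, Fintype.expect_eq_sum_div_card, sum_ite_eq, mem_univ, if_true]
        field_simp

lemma charCoeff_ofReal_zero (A : G → ℝ) : charCoeff (fun g ↦ (A g : ℂ)) 0 = (𝔼 g, A g : ℝ) := by
  simp [charCoeff, Complex.ofReal_expect]

variable {A : G → ℝ}

lemma sum_norm_charCoeff_sq_of_indicator (hA : ∀ g, A g = 0 ∨ A g = 1) :
    ∑ χ, ‖charCoeff (fun g ↦ (A g : ℂ)) χ‖ ^ 2 = 𝔼 g, A g := by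
  have parseval := sum_norm_charCoeff_sq_mul (fun g ↦ (A g : ℂ)) 0
  have hsq (g : G) : (A g : ℂ) * A g = A g := by rcases hA g with h | h <;> simp [h]
  simp only [AddChar.map_zero_eq_one, mul_one, add_zero, Complex.conj_ofReal, hsq] at parseval
  exact_mod_cast parseval

variable {ι : Type*} [Fintype ι] {s : ι → G}

lemma sum_norm_charCoeff_sq_mul_re_expect (hs : ∀ i g, A g * A (g + s i) = 0) :
    ∑ χ, ‖charCoeff (fun g ↦ (A g : ℂ)) χ‖ ^ 2 * (𝔼 i, χ (s i)).re = 0 := by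
  have vanish (i : ι) : ∑ χ, (‖charCoeff (fun g ↦ (A g : ℂ)) χ‖ ^ 2 : ℂ) * χ (s i) = 0 := by
    rw [sum_norm_charCoeff_sq_mul]
    refine expect_eq_zero fun g _ ↦ ?_
    rw [Complex.conj_ofReal, mul_comm]
    exact_mod_cast hs i g
  have total : ∑ χ, ((‖charCoeff (fun g ↦ (A g : ℂ)) χ‖ ^ 2 : ℝ) : ℂ) * 𝔼 i, χ (s i) = 0 := by
    simp only [mul_expect, ← expect_sum_comm]
    exact expect_eq_zero fun i _ ↦ by exact_mod_cast vanish i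
  simpa only [Complex.re_sum, Complex.re_ofReal_mul, Complex.zero_re] using
    congrArg Complex.re total

/-- For `S = ∅` this is the Hoffman bound `𝔼 g, A g ≤ τ / (1 + τ)`. -/
theorem mul_sum_norm_charCoeff_sq_le_of_independent [Nonempty ι]
    (hA : ∀ g, A g = 0 ∨ A g = 1) (hs : ∀ i g, A g * A (g + s i) = 0)
    {τ σ : ℝ} {S : Finset (AddChar G ℂ)} (hS : 0 ∉ S)
    (hτ : ∀ χ : AddChar G ℂ, -τ ≤ (𝔼 i, χ (s i)).re) (hσ : ∀ χ ∈ S, -σ ≤ (𝔼 i, χ (s i)).re) :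
    (τ - σ) * ∑ χ ∈ S, ‖charCoeff (fun g ↦ (A g : ℂ)) χ‖ ^ 2 ≤
      (𝔼 g, A g) * (τ - (1 + τ) * 𝔼 g, A g) := by
  classical
  set μ := 𝔼 g, A g
  set w : AddChar G ℂ → ℝ := fun χ ↦ ‖charCoeff (fun g ↦ (A g : ℂ)) χ‖ ^ 2 with hw
  set eig : AddChar G ℂ → ℝ := fun χ ↦ (𝔼 i, χ (s i)).re with heig
  have hw_nonneg (χ) : 0 ≤ w χ := sq_nonneg _
  have hw_zero : w 0 = μ ^ 2 := by
    simp only [hw]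
    rw [charCoeff_ofReal_zero, Complex.norm_real, Real.norm_eq_abs, sq_abs]
  have heig_zero : eig 0 = 1 := by simp [heig]
  have key : μ ^ 2 * (1 + τ) + (τ - σ) * ∑ χ ∈ S, w χ ≤ τ * μ :=
    calc μ ^ 2 * (1 + τ) + (τ - σ) * ∑ χ ∈ S, w χ
        ≤ w 0 * (eig 0 + τ) + ∑ χ ∈ S, w χ * (eig χ + τ) := by
          rw [hw_zero, heig_zero, mul_sum]
          refine add_le_add_right (sum_le_sum fun χ hχ ↦ ?_) _
          rw [mul_comm]
          exact mul_le_mul_of_nonneg_left (by linarith [hσ χ hχ]) (hw_nonneg χ)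
      _ = ∑ χ ∈ insert 0 S, w χ * (eig χ + τ) := by rw [sum_insert hS]
      _ ≤ ∑ χ, w χ * (eig χ + τ) :=
          sum_le_univ_sum_of_nonneg fun χ ↦
            mul_nonneg (hw_nonneg χ) (by linarith [hτ χ])
      _ = τ * μ := by
          simp only [mul_add, sum_add_distrib, ← sum_mul]
          rw [sum_norm_charCoeff_sq_mul_re_expect hs, sum_norm_charCoeff_sq_of_indicator hA,
            zero_add, mul_comm]
  linarith

end FiniteFourier

section GaussSum

open Finset ComplexConjugate

lemma re_eq_neg_half_of_pow_three_eq_one {z : ℂ} (hz : z ^ 3 = 1) (hz1 : z ≠ 1) :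
    z.re = -1 / 2 := by
  have hquad : z ^ 2 + z + 1 = 0 :=
    (mul_eq_zero.1 (by linear_combination hz : (z - 1) * (z ^ 2 + z + 1) = 0)).resolve_left
      (sub_ne_zero.2 hz1)
  have hre : z.re ^ 2 - z.im ^ 2 + z.re + 1 = 0 := by
    simpa [pow_two] using congrArg Complex.re hquad
  have him : z.im * (2 * z.re + 1) = 0 := by
    have := congrArg Complex.im hquad
    simp only [pow_two, Complex.add_im, Complex.mul_im, Complex.one_im, Complex.zero_im] at this
    linarith
  rcases mul_eq_zero.1 him with h | h
  · rw [h] at hre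
    nlinarith [sq_nonneg (2 * z.re + 1)]
  · linarith

lemma neg_half_le_re_of_pow_three_eq_one {z : ℂ} (hz : z ^ 3 = 1) : -1 / 2 ≤ z.re := by
  by_cases hz1 : z = 1
  · norm_num [hz1]
  · exact (re_eq_neg_half_of_pow_three_eq_one hz hz1).ge

lemma addChar_pow_eq_one {n : ℕ} {V : Type*} [AddCommGroup V] [Module (ZMod n) V]
    (χ : AddChar V ℂ) (v : V) : χ v ^ n = 1 := by
  rw [← AddChar.map_nsmul_eq_pow, ZModModule.char_nsmul_eq_zero, AddChar.map_zero_eq_one]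

lemma neg_half_le_re_expect_addChar {V ι : Type*} [AddCommGroup V] [Module (ZMod 3) V]
    [Fintype ι] [Nonempty ι] (χ : AddChar V ℂ) (s : ι → V) : -1 / 2 ≤ (𝔼 i, χ (s i)).re := by
  rw [Complex.re_expect]
  exact le_expect univ_nonempty fun i _ ↦
    neg_half_le_re_of_pow_three_eq_one (addChar_pow_eq_one χ (s i))

section CommRing

variable {R V : Type*} [CommRing R] [AddCommGroup V] [Module R V] [Fintype V]
  {ψ : AddChar R ℂ}

lemma expect_addChar_linearMap (hψ : ψ.IsPrimitive) (φ : V →ₗ[R] R) [Decidable (φ = 0)] :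
    𝔼 v, ψ (φ v) = if φ = 0 then 1 else 0 := by
  classical
  have h_iff : ψ.compAddMonoidHom (φ : V →+ R) = 0 ↔ φ = 0 := by
    refine ⟨fun h ↦ ?_, fun h ↦ by simp [AddChar.eq_zero_iff, h]⟩
    by_contra hφ
    obtain ⟨v, hv⟩ := DFunLike.ne_iff.1 hφ
    obtain ⟨c, hc⟩ := AddChar.ne_one_iff.1 (hψ hv)
    refine hc ?_
    simpa [AddChar.mulShift_apply, mul_comm] using AddChar.eq_zero_iff.1 h (c • v)
  simpa [h_iff] using AddChar.expect_eq_ite (ψ.compAddMonoidHom (φ : V →+ R))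

lemma norm_expect_addChar_self_sq [Finite R] (hψ : ψ.IsPrimitive) (h2 : IsUnit (2 : R))
    {B : LinearMap.BilinForm R V} (hB : B.IsSymm) :
    ‖𝔼 v, ψ (B v v)‖ ^ 2 = Nat.card (LinearMap.ker B) / Nat.card V := by
  classical
  have expand (u v : V) : conj (ψ (B v v)) * ψ (B (v + u) (v + u)) =
      ψ (B u u) * ψ (((2 : R) • B u) v) := by
    rw [← AddChar.map_neg_eq_conj, ← AddChar.map_add_eq_mul, ← AddChar.map_add_eq_mul]
    congr 1
    have hsymm : B u v = B v u := hB.eq u v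
    simp only [map_add, LinearMap.add_apply, LinearMap.smul_apply, smul_eq_mul, hsymm]
    ring
  have inner (u : V) : 𝔼 v, ψ (((2 : R) • B u) v) = if u ∈ LinearMap.ker B then 1 else 0 := by
    rw [expect_addChar_linearMap hψ]
    simp only [h2.smul_eq_zero, LinearMap.mem_ker]
  have diag (u : V) : ψ (B u u) * (if u ∈ LinearMap.ker B then 1 else 0) =
      if u ∈ LinearMap.ker B then 1 else 0 := by
    split_ifs with hu
    · rw [LinearMap.mem_ker.1 hu, LinearMap.zero_apply, AddChar.map_zero_eq_one, one_mul]
    · rw [mul_zero]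
  have hsq : (‖𝔼 v, ψ (B v v)‖ ^ 2 : ℂ) = Nat.card (LinearMap.ker B) / Nat.card V :=
    calc (‖𝔼 v, ψ (B v v)‖ ^ 2 : ℂ)
        = 𝔼 v, 𝔼 u, conj (ψ (B v v)) * ψ (B (v + u) (v + u)) := by
          rw [← Complex.conj_mul', map_expect, expect_mul]
          refine expect_congr rfl fun v _ ↦ ?_
          rw [mul_expect]
          exact Fintype.expect_equiv (Equiv.subRight v) _ _ fun u ↦ by simp
      _ = 𝔼 u, ψ (B u u) * 𝔼 v, ψ (((2 : R) • B u) v) := by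
          rw [expect_comm]
          simp only [expand, mul_expect]
      _ = Nat.card (LinearMap.ker B) / Nat.card V := by
          simp only [inner, diag, Fintype.expect_eq_sum_div_card, sum_boole,
            Nat.card_eq_fintype_card, Fintype.card_subtype]
  apply Complex.ofReal_injective
  push_cast
  exact hsq

end CommRing

lemma card_ker_div_card {K V W : Type*} [Field K] [Finite K] [AddCommGroup V] [Module K V]
    [Finite V] [AddCommGroup W] [Module K W] (f : V →ₗ[K] W) :
    (Nat.card (LinearMap.ker f) : ℝ) / Nat.card V =
      ((Nat.card K : ℝ) ^ Module.finrank K (LinearMap.range f))⁻¹ := by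
  have hcard : Nat.card V =
      Nat.card K ^ Module.finrank K (LinearMap.range f) * Nat.card (LinearMap.ker f) := by
    rw [Submodule.card_eq_card_quotient_mul_card (LinearMap.ker f), mul_comm,
      Nat.card_congr f.quotKerEquivRange.toEquiv, Module.natCard_eq_pow_finrank (K := K)]
  have hker : (Nat.card (LinearMap.ker f) : ℝ) ≠ 0 := by
    exact_mod_cast Nat.card_pos.ne'
  rw [hcard, Nat.cast_mul, Nat.cast_pow]
  field_simp

section ZModThree

variable {V : Type*} [AddCommGroup V] [Module (ZMod 3) V] [Fintype V] {ψ : AddChar (ZMod 3) ℂ}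
  {B : LinearMap.BilinForm (ZMod 3) V}

lemma norm_expect_addChar_self_le_third (hψ : ψ.IsPrimitive) (hB : B.IsSymm)
    (hrank : 2 ≤ Module.finrank (ZMod 3) (LinearMap.range B)) :
    ‖𝔼 v, ψ (B v v)‖ ≤ 1 / 3 := by
  have hsq : ‖𝔼 v, ψ (B v v)‖ ^ 2 ≤ (1 / 3) ^ 2 :=
    calc ‖𝔼 v, ψ (B v v)‖ ^ 2
        = ((3 : ℝ) ^ Module.finrank (ZMod 3) (LinearMap.range B))⁻¹ := by
          rw [norm_expect_addChar_self_sq hψ (by decide) hB, card_ker_div_card, Nat.card_zmod]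
          norm_num
      _ ≤ ((3 : ℝ) ^ 2)⁻¹ := by gcongr; norm_num
      _ = (1 / 3) ^ 2 := by norm_num
  exact (sq_le_sq₀ (norm_nonneg _) (by norm_num)).1 hsq

lemma card_ker_le_re_expect_addChar_self :
    3 / 2 * ((Nat.card (LinearMap.ker B) : ℝ) / Nat.card V) - 1 / 2 ≤
      (𝔼 v, ψ (B v v)).re := by
  classical
  have pointwise (v : V) :
      3 / 2 * (if v ∈ LinearMap.ker B then 1 else 0) - 1 / 2 ≤ (ψ (B v v)).re := by
    split_ifs with hv
    · rw [LinearMap.mem_ker.1 hv]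
      norm_num
    · linarith [neg_half_le_re_of_pow_three_eq_one (addChar_pow_eq_one ψ (B v v))]
  calc 3 / 2 * ((Nat.card (LinearMap.ker B) : ℝ) / Nat.card V) - 1 / 2
      = 𝔼 v, (3 / 2 * (if v ∈ LinearMap.ker B then 1 else 0) - 1 / 2 : ℝ) := by
        rw [expect_sub_distrib, ← mul_expect, Fintype.expect_const]
        simp only [Fintype.expect_eq_sum_div_card, sum_boole, Nat.card_eq_fintype_card,
          Fintype.card_subtype]
    _ ≤ 𝔼 v, (ψ (B v v)).re := expect_le_expect fun v _ ↦ pointwise v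
    _ = (𝔼 v, ψ (B v v)).re := (Complex.re_expect _ _).symm

lemma neg_third_le_re_expect_addChar_self (hψ : ψ.IsPrimitive) (hB : B.IsSymm) :
    -1 / 3 ≤ (𝔼 v, ψ (B v v)).re := by
  rcases le_or_gt 2 (Module.finrank (ZMod 3) (LinearMap.range B)) with hrank | hrank
  · have := (Complex.abs_re_le_norm _).trans (norm_expect_addChar_self_le_third hψ hB hrank)
    linarith [neg_le_of_abs_le this]
  · have hker : (1 / 3 : ℝ) ≤ (Nat.card (LinearMap.ker B) : ℝ) / Nat.card V := by
      rw [card_ker_div_card, Nat.card_zmod, one_div]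
      gcongr
      exact (pow_le_pow_right₀ (by norm_num) (Nat.lt_succ_iff.1 hrank)).trans_eq (by norm_num)
    linarith [card_ker_le_re_expect_addChar_self (ψ := ψ) (B := B)]

end ZModThree

end GaussSum

section ReducedPolynomials

open MvPolynomial

lemma evalₗ_one (σ R : Type*) [CommSemiring R] : evalₗ R σ 1 = 1 :=
  funext fun x ↦ (eval x).map_one

lemma evalₗ_mul {σ R : Type*} [CommSemiring R] (P Q : MvPolynomial σ R) :
    evalₗ R σ (P * Q) = evalₗ R σ P * evalₗ R σ Q :=
  funext fun x ↦ (eval x).map_mul P Q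

lemma exists_reduced_exponent (K : Type*) [Field K] [Fintype K] (n : ℕ) :
    ∃ k ≤ n, k ≤ Fintype.card K - 1 ∧ ∀ a : K, a ^ k = a ^ n := by
  induction n using Nat.strong_induction_on with
  | _ n ih =>
    have hq : 1 < Fintype.card K := Fintype.one_lt_card
    rcases lt_or_ge n (Fintype.card K) with hn | hn
    · exact ⟨n, le_rfl, Nat.le_sub_one_of_lt hn, fun _ ↦ rfl⟩
    · have hlt : n - Fintype.card K + 1 < n := by omega
      obtain ⟨k, hk_le, hk_card, hk_pow⟩ := ih _ hlt
      refine ⟨k, hk_le.trans hlt.le, hk_card, fun a ↦ ?_⟩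
      rw [hk_pow, pow_succ, ← Nat.sub_add_cancel hn, pow_add, FiniteField.pow_card,
        Nat.sub_add_cancel hn]

variable {σ K : Type*} [Field K]

lemma exists_reduced_monomial [Fintype K] (m : σ →₀ ℕ) (c : K) :
    ∃ Q ∈ restrictTotalDegree σ K m.degree ⊓ restrictDegree σ K (Fintype.card K - 1),
      evalₗ K σ Q = evalₗ K σ (monomial m c) := by
  choose red hred_le hred_card hred_pow using exists_reduced_exponent K
  have hred_zero : red 0 = 0 := Nat.le_zero.1 (hred_le 0)
  refine ⟨monomial (m.mapRange red hred_zero) c, ⟨?_, ?_⟩, ?_⟩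
  · refine (mem_restrictTotalDegree ..).2 ((totalDegree_monomial_le _ _).trans ?_)
    rw [Finsupp.sum_mapRange_index fun _ ↦ rfl]
    exact Finset.sum_le_sum fun i _ ↦ hred_le (m i)
  · refine (mem_restrictDegree ..).2 fun t ht i ↦ ?_
    rw [Finset.mem_singleton.1 (support_monomial_subset ht), Finsupp.mapRange_apply]
    exact hred_card (m i)
  · funext x
    rw [evalₗ_apply, evalₗ_apply, eval_monomial, eval_monomial,
      Finsupp.prod_mapRange_index fun _ ↦ pow_zero _]
    simp only [hred_pow]

lemma map_restrictTotalDegree_inf_restrictDegree (σ K : Type*) [Field K] [Fintype K] (d : ℕ) :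
    (restrictTotalDegree σ K d ⊓ restrictDegree σ K (Fintype.card K - 1)).map (evalₗ K σ) =
      (restrictTotalDegree σ K d).map (evalₗ K σ) := by
  refine le_antisymm (Submodule.map_mono inf_le_left) ?_
  rintro _ ⟨P, hP, rfl⟩
  rw [P.as_sum, map_sum]
  refine Submodule.sum_mem _ fun m hm ↦ ?_
  obtain ⟨Q, ⟨hQ_total, hQ⟩, hQm⟩ := exists_reduced_monomial m (coeff m P)
  have hm_degree : m.degree ≤ d :=
    (le_totalDegree hm).trans ((mem_restrictTotalDegree ..).1 hP)
  refine ⟨Q, ⟨?_, hQ⟩, hQm⟩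
  exact (mem_restrictTotalDegree ..).2 (((mem_restrictTotalDegree ..).1 hQ_total).trans hm_degree)

end ReducedPolynomials

section MultiplicativeFunctional

open MvPolynomial

variable {σ K : Type*} [Field K]

theorem exists_forall_apply_eq_mul_eval {φ : MvPolynomial σ K →ₗ[K] K} (h1 : φ 1 ≠ 0)
    {d : ℕ} (hφ : ∀ P Q : MvPolynomial σ K, P.totalDegree ≤ d → Q.totalDegree ≤ d →
      φ 1 * φ (P * Q) = φ P * φ Q) :
    ∃ z : σ → K, ∀ P : MvPolynomial σ K, P.totalDegree ≤ 2 * d → φ P = φ 1 * eval z P := by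
  set z : σ → K := fun i ↦ φ (X i) / φ 1
  set E : Submodule K (MvPolynomial σ K) :=
    LinearMap.eqLocus φ (φ 1 • (aeval z).toLinearMap)
  have mem_E (P : MvPolynomial σ K) : P ∈ E ↔ φ P = φ 1 * eval z P := by
    simp [E, LinearMap.mem_eqLocus]
  have hom_le (n : ℕ) (hn : n ≤ 2 * d) : homogeneousSubmodule σ K n ≤ E := by
    induction n using Nat.strong_induction_on with
    | _ n ih =>
      rcases (by omega : n = 0 ∨ n = 1 ∨ 2 ≤ n) with rfl | rfl | hn2
      · rw [homogeneousSubmodule_zero, Submodule.one_le, mem_E, (eval z).map_one, mul_one]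
      · rw [homogeneousSubmodule_one_eq_span_X, Submodule.span_le]
        rintro _ ⟨i, rfl⟩
        exact (mem_E _).2 (by rw [eval_X, mul_div_cancel₀ _ h1])
      · -- Forms of degree `n` are sums of products of forms of degrees `⌊n / 2⌋, ⌈n / 2⌉ ≤ d`.
        have hsplit : n / 2 + (n - n / 2) = n := by omega
        rw [← hsplit, ← homogeneousSubmodule_one_pow, pow_add, homogeneousSubmodule_one_pow,
          homogeneousSubmodule_one_pow, Submodule.mul_le]
        intro P hP Q hQ
        have hPE := (mem_E P).1 (ih (n / 2) (by omega) (by omega) hP)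
        have hQE := (mem_E Q).1 (ih (n - n / 2) (by omega) (by omega) hQ)
        have hPQ := hφ P Q (hP.totalDegree_le.trans (by omega)) (hQ.totalDegree_le.trans (by omega))
        refine (mem_E _).2 (mul_left_cancel₀ h1 ?_)
        rw [hPQ, hPE, hQE, map_mul]
        ring
  refine ⟨z, fun P hP ↦ (mem_E P).1 ?_⟩
  rw [← sum_homogeneousComponent P]
  refine Submodule.sum_mem _ fun n hn ↦ hom_le n ?_ (homogeneousComponent_isHomogeneous n P)
  exact (Nat.lt_succ_iff.1 (Finset.mem_range.1 hn)).trans hP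

lemma exists_forall_smul_eq_of_finrank_range_le_one {V U : Type*} [AddCommGroup V] [Module K V]
    [AddCommGroup U] [Module K U] {f : V →ₗ[K] U} [FiniteDimensional K (LinearMap.range f)]
    (hf : Module.finrank K (LinearMap.range f) ≤ 1) : ∃ g : U, ∀ v, ∃ c : K, c • g = f v := by
  obtain ⟨⟨g, _⟩, hg⟩ := finrank_le_one_iff.1 hf
  exact ⟨g, fun v ↦ (hg ⟨f v, v, rfl⟩).imp fun _ hc ↦ congrArg Subtype.val hc⟩

lemma apply_mul_apply_comm_of_finrank_range_le_one {V W : Type*} [AddCommGroup V] [Module K V]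
    [AddCommGroup W] [Module K W] {f : V →ₗ[K] W →ₗ[K] K}
    [FiniteDimensional K (LinearMap.range f)]
    (hf : Module.finrank K (LinearMap.range f) ≤ 1) (a c : V) (b e : W) :
    f a b * f c e = f a e * f c b := by
  obtain ⟨g, hg⟩ := exists_forall_smul_eq_of_finrank_range_le_one hf
  obtain ⟨s, hs⟩ := hg a
  obtain ⟨t, ht⟩ := hg c
  rw [← hs, ← ht]
  simp only [LinearMap.smul_apply, smul_eq_mul]
  ring

end MultiplicativeFunctional

section PolynomialFunctions

open Finset MvPolynomial

/-- The space `P_{r,d}` as a linear subspace. The bound on individual degrees is dropped from the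
encoding, since reducing exponents modulo `x ^ 3 = x` does not change the function. -/
noncomputable def polySubmodule (r d : ℕ) : Submodule F3 (Fn r) :=
  (restrictTotalDegree (Fin r) F3 d).map (evalₗ F3 (Fin r))

noncomputable instance (r d : ℕ) : Fintype (polySubmodule r d) := Fintype.ofFinite _

variable {r d e : ℕ} {f g : Fn r}

lemma mem_polySubmodule_iff : f ∈ polySubmodule r d ↔ f ∈ PolySet r d := by
  rw [polySubmodule, ← map_restrictTotalDegree_inf_restrictDegree, ZMod.card]
  constructor
  · rintro ⟨P, ⟨hP, hP'⟩, rfl⟩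
    exact ⟨P, (mem_restrictTotalDegree ..).1 hP,
      fun i ↦ (degreeOf_le_iff ..).2 fun m hm ↦ (mem_restrictDegree ..).1 hP' m hm i, fun _ ↦ rfl⟩
  · rintro ⟨P, hP, hP', hf⟩
    exact ⟨P, ⟨(mem_restrictTotalDegree ..).2 hP,
      (mem_restrictDegree ..).2 fun m hm i ↦ (degreeOf_le_iff ..).1 (hP' i) m hm⟩,
      (funext hf).symm⟩

lemma mem_polyFinset : f ∈ polyFinset r d ↔ f ∈ polySubmodule r d := by
  rw [polyFinset, Set.Finite.mem_toFinset, mem_polySubmodule_iff]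

lemma evalₗ_mem_polySubmodule {P : MvPolynomial (Fin r) F3} (hP : P.totalDegree ≤ d) :
    evalₗ F3 (Fin r) P ∈ polySubmodule r d :=
  ⟨P, (mem_restrictTotalDegree ..).2 hP, rfl⟩

lemma one_mem_polySubmodule : (1 : Fn r) ∈ polySubmodule r d :=
  evalₗ_one (Fin r) F3 ▸ evalₗ_mem_polySubmodule (by simp)

lemma mul_mem_polySubmodule (hf : f ∈ polySubmodule r d) (hg : g ∈ polySubmodule r e) :
    f * g ∈ polySubmodule r (d + e) := by
  obtain ⟨P, hP, rfl⟩ := hf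
  obtain ⟨Q, hQ, rfl⟩ := hg
  rw [← evalₗ_mul]
  exact evalₗ_mem_polySubmodule <| (totalDegree_mul P Q).trans
    (add_le_add ((mem_restrictTotalDegree ..).1 hP) ((mem_restrictTotalDegree ..).1 hQ))

lemma shift_one_eq (p : Fn r) : shift p 1 = p * p + 1 := by
  ext x
  simp [shift, pow_two]

/-- The function `p ^ 2 + 1`, an edge direction of the graph `𝒢`, as an element of `P_{r,2d}`. -/
def polyShift (p : polySubmodule r d) : polySubmodule r (2 * d) :=
  ⟨shift p 1, by
    rw [shift_one_eq, two_mul]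
    exact add_mem (mul_mem_polySubmodule p.2 p.2) one_mem_polySubmodule⟩

lemma mem_dualSet_iff :
    f ∈ dualSet r (PolySet r d) ↔ ∀ g ∈ polySubmodule r d, dotF f g = 0 := by
  simp only [dualSet, Set.mem_ofPred_eq, mem_polySubmodule_iff]

lemma sum_polyFinset_div_card {K : Type*} [Field K] [CharZero K] (F : Fn r → K) :
    (∑ g ∈ polyFinset r d, F g) / ((polyFinset r d).card : K) =
      𝔼 g : polySubmodule r d, F g := by
  rw [Fintype.expect_eq_sum_div_card, Finset.sum_subtype _ (fun _ ↦ mem_polyFinset) F,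
    Fintype.card_of_subtype _ fun _ ↦ mem_polyFinset]

lemma expP_eq_expect (A : Fn r → ℝ) : expP r d A = 𝔼 g : polySubmodule r d, A g :=
  sum_polyFinset_div_card A

end PolynomialFunctions

section PolynomialCharacters

open Finset MvPolynomial

variable {r d k : ℕ} {β γ : Fn r}

lemma dotF_eq_dotProduct (β f : Fn r) : dotF β f = β ⬝ᵥ f := rfl

lemma chi_eq_stdAddChar (β f : Fn r) : chi β f = ZMod.stdAddChar (dotF β f) := by
  have hval := ZMod.stdAddChar_coe (N := 3) (dotF β f).val
  rw [Int.cast_natCast, ZMod.natCast_zmod_val] at hval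
  rw [hval, chi, ω, ← Complex.exp_nat_mul]
  push_cast
  ring_nf

/-- The character `f ↦ ω ^ ⟨β, f⟩` of the additive group `P_{r,k}`. -/
noncomputable def polyChar (r k : ℕ) (β : Fn r) : AddChar (polySubmodule r k) ℂ :=
  ZMod.stdAddChar.compAddMonoidHom
    (dotProductBilin F3 F3 β ∘ₗ (polySubmodule r k).subtype).toAddMonoidHom

lemma polyChar_apply (β : Fn r) (f : polySubmodule r k) :
    polyChar r k β f = ZMod.stdAddChar (dotF β f) := rfl

lemma polyChar_zero : polyChar r k 0 = 0 := by
  ext f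
  simp [polyChar]

lemma polyChar_eq_iff : polyChar r k β = polyChar r k γ ↔ β - γ ∈ dualSet r (PolySet r k) := by
  simp only [DFunLike.ext_iff, polyChar_apply, Subtype.forall, ZMod.injective_stdAddChar.eq_iff,
    mem_dualSet_iff, dotF_eq_dotProduct, sub_dotProduct, sub_eq_zero]

lemma fourierP_eq_charCoeff (A : Fn r → ℂ) (β : Fn r) :
    fourierP r k A β = charCoeff (fun g : polySubmodule r k ↦ A g) (polyChar r k β) := by
  simp only [charCoeff, polyChar_apply, ← chi_eq_stdAddChar]
  exact sum_polyFinset_div_card fun g ↦ A g * starRingEnd ℂ (chi β g)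

/-- The symmetric bilinear form `(p, q) ↦ ⟨β, p * q⟩` on `P_{r,d}`. -/
noncomputable def productForm (d : ℕ) (β : Fn r) :
    LinearMap.BilinForm F3 (polySubmodule r d) :=
  ((LinearMap.mul F3 (Fn r)).compr₂ (dotProductBilin F3 F3 β)).domRestrict₁₂
    (polySubmodule r d) (polySubmodule r d)

lemma productForm_apply (β : Fn r) (p q : polySubmodule r d) :
    productForm d β p q = dotF β (p * q : Fn r) := rfl

lemma productForm_isSymm (β : Fn r) : (productForm d β).IsSymm :=
  ⟨fun p q ↦ congrArg (dotF β) (mul_comm (p : Fn r) q)⟩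

lemma polyChar_polyShift (β : Fn r) (p : polySubmodule r d) :
    polyChar r (2 * d) β (polyShift p) =
      ZMod.stdAddChar (dotF β 1) * ZMod.stdAddChar (productForm d β p p) := by
  simp only [polyChar_apply, polyShift, productForm_apply, shift_one_eq, dotF_eq_dotProduct,
    dotProduct_add, AddChar.map_add_eq_mul, mul_comm]

lemma supp_single_le_one (z : Pt r) (c : F3) : supp (Pi.single z c) ≤ 1 := by
  refine card_le_one_iff_subset_singleton.2 ⟨z, fun x hx ↦ mem_singleton.2 ?_⟩
  by_contra hxz
  exact (mem_filter.1 hx).2 (Pi.single_eq_of_ne (M := fun _ ↦ F3) hxz c)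

lemma exists_supp_le_one_of_finrank_le_one (hβ : dotF β 1 ≠ 0)
    (hrank : Module.finrank F3 (LinearMap.range (productForm d β)) ≤ 1) :
    ∃ γ, supp γ ≤ 1 ∧ β - γ ∈ dualSet r (PolySet r (2 * d)) := by
  set φ : MvPolynomial (Fin r) F3 →ₗ[F3] F3 := dotProductBilin F3 F3 β ∘ₗ evalₗ F3 (Fin r)
  have φ_apply (P : MvPolynomial (Fin r) F3) : φ P = dotF β (evalₗ F3 (Fin r) P) := rfl
  have φ_mul (P Q : MvPolynomial (Fin r) F3) (hP : P.totalDegree ≤ d) (hQ : Q.totalDegree ≤ d) :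
      φ 1 * φ (P * Q) = φ P * φ Q := by
    have minor := apply_mul_apply_comm_of_finrank_range_le_one hrank
      ⟨1, one_mem_polySubmodule⟩ ⟨_, evalₗ_mem_polySubmodule hP⟩
      ⟨1, one_mem_polySubmodule⟩ ⟨_, evalₗ_mem_polySubmodule hQ⟩
    simp only [productForm_apply, one_mul, mul_one] at minor
    rw [φ_apply 1, φ_apply P, φ_apply Q, φ_apply (P * Q), evalₗ_one, evalₗ_mul, minor,
      mul_comm]
  obtain ⟨z, hz⟩ := exists_forall_apply_eq_mul_eval (by rwa [φ_apply, evalₗ_one]) φ_mul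
  refine ⟨Pi.single z (dotF β 1), supp_single_le_one _ _, mem_dualSet_iff.2 ?_⟩
  rintro _ ⟨P, hP, rfl⟩
  have hPz := hz P ((mem_restrictTotalDegree ..).1 hP)
  rw [φ_apply, φ_apply, evalₗ_one] at hPz
  rw [dotF_eq_dotProduct, sub_dotProduct, single_dotProduct, sub_eq_zero]
  exact hPz

lemma neg_third_le_re_expect_polyChar_polyShift
    (hβ : ∀ γ, β - γ ∈ dualSet r (PolySet r (2 * d)) → 1 < supp γ) :
    -1 / 3 ≤ (𝔼 p : polySubmodule r d, polyChar r (2 * d) β (polyShift p)).re := by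
  have hψ := ZMod.isPrimitive_stdAddChar 3
  simp only [polyChar_polyShift, ← mul_expect]
  by_cases h1 : dotF β 1 = 0
  · rw [h1, AddChar.map_zero_eq_one, one_mul]
    exact neg_third_le_re_expect_addChar_self hψ (productForm_isSymm β)
  · have hrank : 2 ≤ Module.finrank F3 (LinearMap.range (productForm d β)) := by
      by_contra! hlt
      obtain ⟨γ, hγ, hβγ⟩ := exists_supp_le_one_of_finrank_le_one h1 (Nat.lt_succ_iff.1 hlt)
      exact hγ.not_gt (hβ γ hβγ)
    have hnorm := norm_expect_addChar_self_le_third hψ (productForm_isSymm β) hrank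
    rw [neg_div]
    refine neg_le_of_abs_le ((Complex.abs_re_le_norm _).trans ?_)
    rwa [norm_mul, AddChar.norm_apply, one_mul]

lemma polyChar_injOn {Λ : Finset (Fn r)} (hΛ : IsMinRepSet r k Λ) :
    Set.InjOn (polyChar r k) Λ := fun α hα β hβ h ↦
  (hΛ.1 α).unique ⟨hα, by simp [mem_dualSet_iff, dotF_eq_dotProduct]⟩
    ⟨hβ, polyChar_eq_iff.1 h⟩

lemma sum_norm_fourierP_sq_eq_sum_image [DecidableEq (AddChar (polySubmodule r k) ℂ)]
    {Λ T : Finset (Fn r)} (hΛ : IsMinRepSet r k Λ) (hT : T ⊆ Λ) (A : Fn r → ℂ) :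
    ∑ α ∈ T, ‖fourierP r k A α‖ ^ 2 =
      ∑ χ ∈ T.image (polyChar r k), ‖charCoeff (fun g : polySubmodule r k ↦ A g) χ‖ ^ 2 := by
  rw [sum_image ((polyChar_injOn hΛ).mono hT)]
  simp only [fourierP_eq_charCoeff]

theorem stmt15_general (r d : ℕ) (A : Fn r → ℝ)
    (hA : ∀ f ∈ polyFinset r (2 * d), A f = 0 ∨ A f = 1)
    (hind : ∀ f ∈ polyFinset r (2 * d), ∀ p ∈ polyFinset r d, ¬(A f = 1 ∧ A (f + shift p 1) = 1))
    (Λ : Finset (Fn r)) (hΛ : IsMinRepSet r (2 * d) Λ) :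
    ∑ α ∈ Λ.filter (fun α ↦ 1 < supp α), ‖fourierP r (2 * d) (fun f ↦ (A f : ℂ)) α‖ ^ 2 ≤
      9 * expP r (2 * d) A * (1 / 3 - expP r (2 * d) A) := by
  classical
  set Λ' := Λ.filter fun α ↦ 1 < supp α
  have one_lt_supp {α} (hα : α ∈ Λ') (γ) (hγ : α - γ ∈ dualSet r (PolySet r (2 * d))) :
      1 < supp γ :=
    (mem_filter.1 hα).2.trans_le (hΛ.2 α (mem_filter.1 hα).1 γ hγ)
  have zero_notMem : 0 ∉ Λ'.image (polyChar r (2 * d)) := by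
    rw [mem_image]
    rintro ⟨α, hα, h0⟩
    have h := one_lt_supp hα 0 (polyChar_eq_iff.1 (h0.trans polyChar_zero.symm))
    simp [supp] at h
  have indicator (g : polySubmodule r (2 * d)) : A g = 0 ∨ A g = 1 := hA g (mem_polyFinset.2 g.2)
  have indep (p : polySubmodule r d) (g : polySubmodule r (2 * d)) :
      A g * A ↑(g + polyShift p) = 0 := by
    have hnot := hind g (mem_polyFinset.2 g.2) p (mem_polyFinset.2 p.2)
    rw [mul_eq_zero]
    by_contra! hne
    exact hnot ⟨(indicator g).resolve_left hne.1, (indicator (g + polyShift p)).resolve_left hne.2⟩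
  have stability := mul_sum_norm_charCoeff_sq_le_of_independent
    (A := fun g : polySubmodule r (2 * d) ↦ A g) (τ := 1 / 2) (σ := 1 / 3) indicator indep
    zero_notMem
    (fun χ ↦ neg_div (2 : ℝ) 1 ▸ neg_half_le_re_expect_addChar χ polyShift)
    (forall_mem_image.2 fun α hα ↦
      neg_div (3 : ℝ) 1 ▸ neg_third_le_re_expect_polyChar_polyShift (one_lt_supp hα))
  rw [sum_norm_fourierP_sq_eq_sum_image hΛ (filter_subset _ _), expP_eq_expect]
  linarith

end PolynomialCharacters

/-- Fourier concentration for near-maximum independent sets (Lemma 3.9): there is `d₀`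
such that for `d ≥ d₀`, if `A` is the indicator of an independent set of `𝒢` on
`P_{r,2d}` with `E[A] = 1/3 − ε` (`ε ∈ [0,1/3)`), then the Fourier mass of `A` above
level 1 is at most `3ε`. -/
theorem stmt15 :
    ∃ d₀ : ℕ, ∀ d : ℕ, d₀ ≤ d → ∀ r : ℕ, ∀ ε : ℝ, 0 ≤ ε → ε < 1 / 3 →
      ∀ A : Fn r → ℝ,
        (∀ f ∈ polyFinset r (2 * d), A f = 0 ∨ A f = 1) →
        (∀ f ∈ polyFinset r (2 * d), ∀ p ∈ polyFinset r d, ∀ a : F3, (a = 1 ∨ a = 2) →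
          ¬(A f = 1 ∧ A (f + shift p a) = 1)) →
        expP r (2 * d) A = 1 / 3 - ε →
        ∀ Λ : Finset (Fn r), IsMinRepSet r (2 * d) Λ →
          (∑ α ∈ Λ.filter (fun α => 1 < supp α),
              ‖fourierP r (2 * d) (fun f => (A f : ℂ)) α‖ ^ 2) ≤ 3 * ε := by
  refine ⟨0, fun d _ r ε _ _ A hA hind hexp Λ hΛ ↦ (stmt15_general r d A hA
    (fun f hf p hp ↦ hind f hf p hp 1 (.inl rfl)) Λ hΛ).trans ?_⟩
  rw [hexp]
  nlinarith [sq_nonneg ε]
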